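/- Let G ⊊ ℝⁿ be a domain, x ∈ G, c > 0, and let γ be a rectifiable path in G starting at x. Let z, z' be points on γ with 0 < a := ℓ(γ[x,z]) ≤ b := ℓ(γ[x,z']), and suppose δ_G(w) ≥ ℓ(γ[x,w])/c for every w on the subpath γ[z,z']. Then the quasihyperbolic length of γ[z,z'] satisfies ℓ_k(γ[z,z']) ≤ c · log(b/a); in particular k_G(z,z') ≤ c · log(b/a). -/

import Mathlib

/-!
Write `L t` for the length of `γ` up to the parameter `t`. By Lebesgue differentiation `L' = ‖γ'‖`
almost everywhere, so the hypothesis on the boundary distance gives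
`‖γ'‖ / δ_G(γ) ≤ c ‖γ'‖ / L = c (log L)'`. Since `log L` is monotone, the integral of its derivative
is at most its increment `log (b / a)`.

The differentiable paths of `IsPathIn` need not have finite length, and `pathLen` is then `0` by the
convention for integrals; thus `0 < a ≤ b` encodes that the path is rectifiable up to `s'`, where
`a` and `b` are its lengths up to `s` and `s'` respectively.
-/

open Set Metric

noncomputable section

/-- The distance from `x` to the boundary of `G`. -/
def bdryDist {n : ℕ} (G : Set (EuclideanSpace ℝ (Fin n))) (x : EuclideanSpace ℝ (Fin n)) : ℝ :=
  Metric.infDist x (frontier G)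

/-- The distance ratio metric `j_G`. -/
def jDist {n : ℕ} (G : Set (EuclideanSpace ℝ (Fin n))) (x y : EuclideanSpace ℝ (Fin n)) : ℝ :=
  Real.log (1 + dist x y / min (bdryDist G x) (bdryDist G y))

/-- Admissible rectifiable paths from `x` to `y` in `G`, parametrized on `[0,1]`. -/
def IsPathIn {n : ℕ} (G : Set (EuclideanSpace ℝ (Fin n))) (x y : EuclideanSpace ℝ (Fin n))
    (γ : ℝ → EuclideanSpace ℝ (Fin n)) : Prop :=
  γ 0 = x ∧ γ 1 = y ∧ ContinuousOn γ (Icc 0 1) ∧ (∀ t ∈ Icc (0:ℝ) 1, γ t ∈ G) ∧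
    DifferentiableOn ℝ γ (Icc 0 1)

/-- The Euclidean length of the subpath of `γ` from parameter `a` to `b`. -/
def pathLen {n : ℕ} (γ : ℝ → EuclideanSpace ℝ (Fin n)) (a b : ℝ) : ℝ :=
  ∫ t in a..b, ‖derivWithin γ (Icc 0 1) t‖

/-- The quasihyperbolic length in `G` of the subpath of `γ` from parameter `a` to `b`. -/
def qhLen {n : ℕ} (G : Set (EuclideanSpace ℝ (Fin n))) (γ : ℝ → EuclideanSpace ℝ (Fin n))
    (a b : ℝ) : ℝ :=
  ∫ t in a..b, ‖derivWithin γ (Icc 0 1) t‖ / bdryDist G (γ t)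

/-- The quasihyperbolic metric `k_G`. -/
def kDist {n : ℕ} (G : Set (EuclideanSpace ℝ (Fin n))) (x y : EuclideanSpace ℝ (Fin n)) : ℝ :=
  sInf {l | ∃ γ, IsPathIn G x y γ ∧ qhLen G γ 0 1 = l}

/-- `φ : [0,∞) → [0,∞)` is a strictly increasing homeomorphism with `φ 0 = 0`. -/
def IncrHomeo (φ : ℝ → ℝ) : Prop :=
  φ 0 = 0 ∧ StrictMonoOn φ (Ici 0) ∧ ContinuousOn φ (Ici 0) ∧ φ '' Ici 0 = Ici 0

/-- `G` is `φ`-uniform. -/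
def PhiUniform {n : ℕ} (G : Set (EuclideanSpace ℝ (Fin n))) (φ : ℝ → ℝ) : Prop :=
  ∀ x ∈ G, ∀ y ∈ G, kDist G x y ≤ φ (dist x y / min (bdryDist G x) (bdryDist G y))

/-- The twisted cone (John) condition with constant `c`. -/
def TwistedCone {n : ℕ} (G : Set (EuclideanSpace ℝ (Fin n))) (c : ℝ) : Prop :=
  ∀ x ∈ G, ∀ y ∈ G, ∃ γ, IsPathIn G x y γ ∧
    ∀ s ∈ Icc (0:ℝ) 1, min (pathLen γ 0 s) (pathLen γ s 1) ≤ c * bdryDist G (γ s)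

end

open MeasureTheory

section Primitive

variable {f : ℝ → ℝ} {o s t : ℝ}

lemma monotoneOn_integral_of_nonneg (hf : ∀ x ∈ Icc o t, 0 ≤ f x)
    (hfi : IntervalIntegrable f volume o t) :
    MonotoneOn (fun w => ∫ x in o..w, f x) (Icc o t) := by
  intro u hu v hv huv
  have hIcc : Icc o v ⊆ Icc o t := Icc_subset_Icc_right hv.2
  refine intervalIntegral.integral_mono_interval le_rfl hu.1 huv ?_ (hfi.mono_set ?_)
  · exact ae_restrict_of_forall_mem measurableSet_Ioc fun x hx => hf x (hIcc ⟨hx.1.le, hx.2⟩)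
  · rwa [uIcc_of_le hv.1, uIcc_of_le (hv.1.trans hv.2)]

lemma integral_pos_of_integral_pos_of_mem_Icc (hf : ∀ x ∈ Icc o t, 0 ≤ f x)
    (hfi : IntervalIntegrable f volume o t) (hos : o ≤ s) (hpos : 0 < ∫ x in o..s, f x)
    {w : ℝ} (hw : w ∈ Icc s t) : 0 < ∫ x in o..w, f x :=
  hpos.trans_le <| monotoneOn_integral_of_nonneg hf hfi ⟨hos, hw.1.trans hw.2⟩
    ⟨hos.trans hw.1, hw.2⟩ hw.1

lemma integral_deriv_log_le_log_div {g : ℝ → ℝ} (hst : s ≤ t) (hg : MonotoneOn g (Icc s t))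
    (hpos : 0 < g s) :
    ∫ x in s..t, deriv (fun y => Real.log (g y)) x ≤ Real.log (g t / g s) := by
  have hg_pos : ∀ x ∈ Icc s t, 0 < g x := fun x hx =>
    hpos.trans_le (hg (left_mem_Icc.2 hst) hx hx.1)
  have hlog : MonotoneOn (fun y => Real.log (g y)) (Icc s t) := fun x hx y hy hxy =>
    Real.log_le_log (hg_pos x hx) (hg hx hy hxy)
  have hincr : 0 ≤ Real.log (g t) - Real.log (g s) :=
    sub_nonneg.2 (hlog (left_mem_Icc.2 hst) (right_mem_Icc.2 hst) hst)
  rw [Real.log_div (hg_pos t (right_mem_Icc.2 hst)).ne' hpos.ne']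
  rw [← uIcc_of_le hst] at hlog
  have hmem := hlog.intervalIntegral_deriv_mem_uIcc
  rw [uIcc_of_le hincr] at hmem
  exact hmem.2

lemma intervalIntegrable_div_integral (hfi : IntervalIntegrable f volume o t) (hos : o ≤ s)
    (hst : s ≤ t) (hne : ∀ w ∈ Icc s t, ∫ x in o..w, f x ≠ 0) :
    IntervalIntegrable (fun w => f w / ∫ x in o..w, f x) volume s t := by
  have hsub : uIcc s t ⊆ uIcc o t := by
    rw [uIcc_of_le hst, uIcc_of_le (hos.trans hst)]
    exact Icc_subset_Icc_left hos
  have hcont : ContinuousOn (fun w => ∫ x in o..w, f x) (uIcc s t) :=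
    (intervalIntegral.continuousOn_primitive_interval' hfi left_mem_uIcc).mono hsub
  simp only [div_eq_mul_inv]
  exact (hfi.mono_set hsub).mul_continuousOn
    (hcont.inv₀ fun w hw => hne w (uIcc_of_le hst ▸ hw))

lemma integral_div_integral_le_log_div (hf : ∀ x ∈ Icc o t, 0 ≤ f x)
    (hfi : IntervalIntegrable f volume o t) (hos : o ≤ s) (hst : s ≤ t)
    (hpos : 0 < ∫ x in o..s, f x) :
    ∫ w in s..t, f w / ∫ x in o..w, f x ≤
      Real.log ((∫ x in o..t, f x) / ∫ x in o..s, f x) := by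
  have hmono : MonotoneOn (fun w => ∫ x in o..w, f x) (Icc s t) :=
    (monotoneOn_integral_of_nonneg hf hfi).mono (Icc_subset_Icc_left hos)
  refine (intervalIntegral.integral_congr_ae ?_).trans_le
    (integral_deriv_log_le_log_div hst hmono hpos)
  filter_upwards [hfi.ae_hasDerivAt_integral] with w hderiv hw
  rw [uIoc_of_le hst] at hw
  have hw_mem : w ∈ uIcc o t := uIcc_of_le (hos.trans hst) ▸ ⟨hos.trans hw.1.le, hw.2⟩
  have hw_pos := integral_pos_of_integral_pos_of_mem_Icc hf hfi hos hpos (Ioc_subset_Icc_self hw)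
  exact ((hderiv hw_mem o left_mem_uIcc).log hw_pos.ne').deriv.symm

lemma integral_div_le_mul_log_div {d : ℝ → ℝ} {c : ℝ} (hc : 0 < c)
    (hf : ∀ x ∈ Icc o t, 0 ≤ f x) (hfi : IntervalIntegrable f volume o t) (hos : o ≤ s)
    (hst : s ≤ t) (hpos : 0 < ∫ x in o..s, f x)
    (hd : ∀ w ∈ Icc s t, (∫ x in o..w, f x) / c ≤ d w) :
    ∫ w in s..t, f w / d w ≤ c * Real.log ((∫ x in o..t, f x) / ∫ x in o..s, f x) := by
  have hL_pos : ∀ w ∈ Icc s t, 0 < ∫ x in o..w, f x := fun w hw =>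
    integral_pos_of_integral_pos_of_mem_Icc hf hfi hos hpos hw
  have hf_nonneg : ∀ w ∈ Icc s t, 0 ≤ f w := fun w hw => hf w ⟨hos.trans hw.1, hw.2⟩
  have hd_pos : ∀ w ∈ Icc s t, 0 < d w := fun w hw =>
    (div_pos (hL_pos w hw) hc).trans_le (hd w hw)
  have hle : ∀ w ∈ Icc s t, f w / d w ≤ c * (f w / ∫ x in o..w, f x) := fun w hw =>
    calc f w / d w ≤ f w / ((∫ x in o..w, f x) / c) :=
          div_le_div_of_nonneg_left (hf_nonneg w hw) (div_pos (hL_pos w hw) hc) (hd w hw)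
      _ = c * (f w / ∫ x in o..w, f x) := by rw [div_div_eq_mul_div, mul_comm, mul_div_assoc]
  have hint : IntervalIntegrable (fun w => c * (f w / ∫ x in o..w, f x)) volume s t :=
    (intervalIntegrable_div_integral hfi hos hst fun w hw => (hL_pos w hw).ne').const_mul c
  calc ∫ w in s..t, f w / d w ≤ ∫ w in s..t, c * (f w / ∫ x in o..w, f x) := by
        rw [intervalIntegral.integral_of_le hst, intervalIntegral.integral_of_le hst]
        exact setIntegral_mono_of_nonneg
          (fun w hw => div_nonneg (hf_nonneg w (Ioc_subset_Icc_self hw))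
            (hd_pos w (Ioc_subset_Icc_self hw)).le)
          (fun w hw => hle w (Ioc_subset_Icc_self hw)) hint.1
    _ = c * ∫ w in s..t, f w / ∫ x in o..w, f x := intervalIntegral.integral_const_mul _ _
    _ ≤ c * Real.log ((∫ x in o..t, f x) / ∫ x in o..s, f x) :=
        mul_le_mul_of_nonneg_left (integral_div_integral_le_log_div hf hfi hos hst hpos) hc.le

end Primitive

section Subpath

lemma hasDerivWithinAt_comp_lineMap {E : Type*} [NormedAddCommGroup E] [NormedSpace ℝ E]
    {γ : ℝ → E} {S : Set ℝ} (hS : Convex ℝ S) (hγ : DifferentiableOn ℝ γ S) {s s' t : ℝ}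
    (hs : s ∈ S) (hs' : s' ∈ S) (ht : t ∈ Icc (0 : ℝ) 1) :
    HasDerivWithinAt (γ ∘ AffineMap.lineMap s s')
      ((s' - s) • derivWithin γ S (AffineMap.lineMap s s' t)) (Icc 0 1) t :=
  have hmaps : MapsTo (AffineMap.lineMap s s') (Icc (0 : ℝ) 1) S := hS.mapsTo_lineMap hs hs'
  (hγ _ (hmaps ht)).hasDerivWithinAt.scomp t AffineMap.hasDerivWithinAt_lineMap hmaps

variable {n : ℕ} {G : Set (EuclideanSpace ℝ (Fin n))} {x y : EuclideanSpace ℝ (Fin n)}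
  {γ : ℝ → EuclideanSpace ℝ (Fin n)} {s s' : ℝ}

lemma IsPathIn.comp_lineMap (hγ : IsPathIn G x y γ) (hs : s ∈ Icc (0 : ℝ) 1)
    (hs' : s' ∈ Icc (0 : ℝ) 1) : IsPathIn G (γ s) (γ s') (γ ∘ AffineMap.lineMap s s') := by
  obtain ⟨-, -, -, hG, hdiff⟩ := hγ
  have hderiv := fun t => hasDerivWithinAt_comp_lineMap (t := t) (convex_Icc 0 1) hdiff hs hs'
  exact ⟨by simp, by simp, fun t ht => (hderiv t ht).continuousWithinAt,
    fun t ht => hG _ ((convex_Icc 0 1).mapsTo_lineMap hs hs' ht),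
    fun t ht => (hderiv t ht).differentiableWithinAt⟩

lemma qhLen_comp_lineMap (hγ : DifferentiableOn ℝ γ (Icc 0 1)) (hs : s ∈ Icc (0 : ℝ) 1)
    (hs' : s' ∈ Icc (0 : ℝ) 1) (hss' : s ≤ s') :
    qhLen G (γ ∘ AffineMap.lineMap s s') 0 1 = qhLen G γ s s' := by
  let ρ : ℝ → ℝ := fun u => ‖derivWithin γ (Icc 0 1) u‖ / bdryDist G (γ u)
  have hspeed : ∀ t ∈ Icc (0 : ℝ) 1, ‖derivWithin (γ ∘ AffineMap.lineMap s s') (Icc 0 1) t‖ =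
      (s' - s) * ‖derivWithin γ (Icc 0 1) (AffineMap.lineMap s s' t)‖ := fun t ht => by
    rw [(hasDerivWithinAt_comp_lineMap (convex_Icc 0 1) hγ hs hs' ht).derivWithin
      (uniqueDiffOn_Icc_zero_one t ht), norm_smul, Real.norm_of_nonneg (sub_nonneg.2 hss')]
  calc qhLen G (γ ∘ AffineMap.lineMap s s') 0 1
      = ∫ t in (0 : ℝ)..1, (s' - s) * ρ (s + (s' - s) * t) := by
        refine intervalIntegral.integral_congr fun t ht => ?_
        rw [uIcc_of_le zero_le_one] at ht
        have hline : AffineMap.lineMap s s' t = s + (s' - s) * t := by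
          rw [AffineMap.lineMap_apply_ring']; ring
        simp only [hspeed t ht, Function.comp_apply, hline, mul_div_assoc, ρ]
    _ = ∫ u in s..s', ρ u := by
        rw [intervalIntegral.integral_const_mul, intervalIntegral.mul_integral_comp_add_mul]
        simp only [mul_zero, add_zero, mul_one, add_sub_cancel]

lemma qhLen_nonneg (hss' : s ≤ s') : 0 ≤ qhLen G γ s s' :=
  intervalIntegral.integral_nonneg hss' fun _ _ => div_nonneg (norm_nonneg _) infDist_nonneg

lemma kDist_le_qhLen (hγ : IsPathIn G x y γ) : kDist G x y ≤ qhLen G γ 0 1 := by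
  refine csInf_le ⟨0, ?_⟩ ⟨γ, hγ, rfl⟩
  rintro _ ⟨σ, -, rfl⟩
  exact qhLen_nonneg zero_le_one

lemma kDist_le_qhLen_subpath (hγ : IsPathIn G x y γ) (hs : s ∈ Icc (0 : ℝ) 1)
    (hs' : s' ∈ Icc (0 : ℝ) 1) (hss' : s ≤ s') : kDist G (γ s) (γ s') ≤ qhLen G γ s s' :=
  (kDist_le_qhLen (hγ.comp_lineMap hs hs')).trans_eq
    (qhLen_comp_lineMap hγ.2.2.2.2 hs hs' hss')

theorem qhLen_le_of_bdryDist_ge_general (hγ : IsPathIn G x y γ) {c : ℝ} (hc : 0 < c)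
    (hs : s ∈ Icc (0 : ℝ) 1) (hs' : s' ∈ Icc (0 : ℝ) 1) (hss' : s ≤ s')
    (ha : 0 < pathLen γ 0 s) (hab : pathLen γ 0 s ≤ pathLen γ 0 s')
    (hδ : ∀ w ∈ Icc s s', pathLen γ 0 w / c ≤ bdryDist G (γ w)) :
    qhLen G γ s s' ≤ c * Real.log (pathLen γ 0 s' / pathLen γ 0 s) ∧
      kDist G (γ s) (γ s') ≤ c * Real.log (pathLen γ 0 s' / pathLen γ 0 s) := by
  have hrect : IntervalIntegrable (fun t => ‖derivWithin γ (Icc 0 1) t‖) volume 0 s' :=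
    intervalIntegral.intervalIntegrable_of_integral_ne_zero (ha.trans_le hab).ne'
  have hqh : qhLen G γ s s' ≤ c * Real.log (pathLen γ 0 s' / pathLen γ 0 s) :=
    integral_div_le_mul_log_div hc (fun _ _ => norm_nonneg _) hrect hs.1 hss' ha hδ
  exact ⟨hqh, (kDist_le_qhLen_subpath hγ hs hs' hss').trans hqh⟩

end Subpath

/-- If along a subpath the boundary distance dominates `ℓ(γ[x,·])/c`,
then the quasihyperbolic length of the subpath is at most `c log(b/a)`. -/
theorem qhLen_le_of_bdryDist_ge
    (n : ℕ) (G : Set (EuclideanSpace ℝ (Fin n)))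
    (hGopen : IsOpen G) (hGconn : IsConnected G) (hGproper : G ≠ Set.univ)
    (x y : EuclideanSpace ℝ (Fin n)) (hx : x ∈ G)
    (γ : ℝ → EuclideanSpace ℝ (Fin n)) (hγ : IsPathIn G x y γ)
    (c : ℝ) (hc : 0 < c)
    (s s' : ℝ) (hs : s ∈ Set.Icc (0:ℝ) 1) (hs' : s' ∈ Set.Icc (0:ℝ) 1) (hss' : s ≤ s')
    (ha : 0 < pathLen γ 0 s) (hab : pathLen γ 0 s ≤ pathLen γ 0 s')
    (hδ : ∀ w ∈ Set.Icc s s', pathLen γ 0 w / c ≤ bdryDist G (γ w)) :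
    qhLen G γ s s' ≤ c * Real.log (pathLen γ 0 s' / pathLen γ 0 s) ∧
      kDist G (γ s) (γ s') ≤ c * Real.log (pathLen γ 0 s' / pathLen γ 0 s) := by
  exact qhLen_le_of_bdryDist_ge_general hγ hc hs hs' hss' ha hab hδ
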